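/- arXiv:1705.07193 — 2 statements merged into one kernel-verified Lean document; each statement's English description precedes it below -/
import Mathlib

section
/- Let ℓ, D, N be positive integers with D ≪ N and let f be a sieve function of range D. Then, uniformly in a ∈ ℤ, Σ_{n ≤ N} f(n)·c_ℓ(n − a) = 𝑓̂(ℓ)·c_ℓ(a)·N + O_ε((Dℓ)^{1+ε}) for every ε > 0. -/
/-- The Ramanujan sum `c_q(n) = ∑_{d ∣ gcd(q,n)} d · μ(q/d)`. -/
def ramanujanSum (q : ℕ) (n : ℤ) : ℤ :=
  ∑ d ∈ (Nat.gcd q n.natAbs).divisors, (d : ℤ) * ArithmeticFunction.moebius (q / d)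

/-!
Write `c_ℓ(n - a) = ∑_{t ∣ ℓ} t μ(ℓ/t) 1[t ∣ n - a]` and collect, for a fixed `d ≤ D`, the
`n ≤ N` divisible by `d`. By the Chinese remainder theorem the conditions `d ∣ n`, `t ∣ n - a`
cut out a single residue class modulo `lcm(t, d)` if `gcd(t, d) ∣ a` and nothing otherwise, so
`t` contributes `μ(ℓ/t) (N/d) gcd(t, d) 1[gcd(t, d) ∣ a]` up to an error of at most `t`. Möbius
inversion of `∑_{q ∣ n} c_q(a) = n 1[n ∣ a]`, restricted to divisors of `d`, turns the sum of
these main terms into `(N/d) c_ℓ(a) 1[ℓ ∣ d]`. The total error is at most `σ(ℓ) ∑_{d ≤ D} |f'(d)|`.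
-/

open Finset
open scoped ArithmeticFunction.Moebius ArithmeticFunction.sigma

theorem exists_modEq_and_modEq_iff_gcd_dvd_sub {m k : ℕ} {a b : ℤ} :
    (∃ n : ℤ, n ≡ a [ZMOD m] ∧ n ≡ b [ZMOD k]) ↔ (Nat.gcd m k : ℤ) ∣ a - b := by
  constructor
  · rintro ⟨n, hna, hnb⟩
    have ha : n ≡ a [ZMOD Nat.gcd m k] := hna.of_dvd (mod_cast Nat.gcd_dvd_left m k)
    have hb : n ≡ b [ZMOD Nat.gcd m k] := hnb.of_dvd (mod_cast Nat.gcd_dvd_right m k)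
    exact (hb.symm.trans ha).dvd
  · intro h
    rw [← Int.gcd_natCast_natCast, Int.coe_gcd] at h
    obtain ⟨x, y, hxy⟩ := (gcd_dvd_iff_exists (m : ℤ) k).1 h
    refine ⟨a - m * x, Int.modEq_iff_dvd.2 ⟨x, by ring⟩, Int.modEq_iff_dvd.2 ⟨-y, ?_⟩⟩
    linear_combination -hxy

theorem modEq_and_modEq_iff_modEq_lcm {m k : ℕ} {n v : ℤ} :
    n ≡ v [ZMOD m] ∧ n ≡ v [ZMOD k] ↔ n ≡ v [ZMOD Nat.lcm m k] := by
  simp only [Int.modEq_iff_dvd, ← Int.lcm_natCast_natCast, Int.coe_lcm_dvd_iff]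

theorem abs_card_filter_modEq_sub_le_one {r : ℤ} (hr : 0 < r) {x y : ℤ} (hxy : x ≤ y) (v : ℤ) :
    |(#{n ∈ Ioc x y | n ≡ v [ZMOD r]} : ℝ) - (y - x) / r| ≤ 1 := by
  set s : ℚ := (y - v) / r with hs
  set u : ℚ := (x - v) / r with hu
  have hus : u ≤ s :=
    div_le_div_of_nonneg_right (sub_le_sub_right (mod_cast hxy) _) (mod_cast hr.le)
  have hcard : (#{n ∈ Ioc x y | n ≡ v [ZMOD r]} : ℚ) = ⌊s⌋ - ⌊u⌋ := by
    have hmax := Int.Ioc_filter_modEq_card x y hr v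
    rw [max_eq_left (sub_nonneg.2 (Int.floor_le_floor hus))] at hmax
    exact_mod_cast hmax
  have hdiff : ((y : ℚ) - x) / r = s - u := by rw [hs, hu]; ring
  have hfract : |(#{n ∈ Ioc x y | n ≡ v [ZMOD r]} : ℚ) - (y - x) / r| ≤ 1 := by
    rw [hcard, hdiff, show ⌊s⌋ - ⌊u⌋ - (s - u) = Int.fract u - Int.fract s by
      simp only [Int.fract]; ring]
    exact abs_sub_le_of_nonneg_of_le (Int.fract_nonneg u) (Int.fract_lt_one u).le
      (Int.fract_nonneg s) (Int.fract_lt_one s).le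
  exact_mod_cast hfract

theorem abs_card_filter_modEq_and_modEq_sub_le_one {m k : ℕ} (hm : 0 < m) (hk : 0 < k)
    {x y : ℤ} (hxy : x ≤ y) (a b : ℤ) :
    |(#{n ∈ Ioc x y | n ≡ a [ZMOD m] ∧ n ≡ b [ZMOD k]} : ℝ) -
      (if (Nat.gcd m k : ℤ) ∣ a - b then (y - x) / (Nat.lcm m k : ℝ) else 0)| ≤ 1 := by
  by_cases h : (Nat.gcd m k : ℤ) ∣ a - b
  · obtain ⟨v, hva, hvb⟩ := exists_modEq_and_modEq_iff_gcd_dvd_sub.2 h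
    have hclass : ∀ n : ℤ, n ≡ a [ZMOD m] ∧ n ≡ b [ZMOD k] ↔ n ≡ v [ZMOD Nat.lcm m k] := by
      intro n
      rw [← modEq_and_modEq_iff_modEq_lcm]
      exact and_congr ⟨(·.trans hva.symm), (·.trans hva)⟩ ⟨(·.trans hvb.symm), (·.trans hvb)⟩
    have hlcm : (0 : ℤ) < Nat.lcm m k := mod_cast Nat.lcm_pos hm hk
    simpa only [h, if_true, hclass, Int.cast_natCast] using
      abs_card_filter_modEq_sub_le_one hlcm hxy v
  · have hempty : {n ∈ Ioc x y | n ≡ a [ZMOD m] ∧ n ≡ b [ZMOD k]} = ∅ :=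
      filter_eq_empty_iff.2 fun n _ hn => h (exists_modEq_and_modEq_iff_gcd_dvd_sub.1 ⟨n, hn⟩)
    simp [h, hempty]

theorem sum_divisors_moebius_smul_gcd {M : Type*} [AddCommGroup M] {f g : ℕ → M}
    (hfg : ∀ n > 0, ∑ q ∈ n.divisors, f q = g n) {ℓ : ℕ} (hℓ : 0 < ℓ) (d : ℕ) :
    ∑ t ∈ ℓ.divisors, μ (ℓ / t) • g (Nat.gcd t d) = if ℓ ∣ d then f ℓ else 0 := by
  have hgcd : ∀ n > 0, ∑ q ∈ n.divisors, (if q ∣ d then f q else 0) = g (Nat.gcd n d) := by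
    intro n hn
    have hfilter : n.divisors.filter (· ∣ d) = (Nat.gcd n d).divisors := by
      rw [← Nat.divisors_filter_dvd_of_dvd hn.ne' (Nat.gcd_dvd_left n d)]
      exact filter_congr fun q hq => by simp [Nat.dvd_gcd_iff, Nat.dvd_of_mem_divisors hq]
    rw [← sum_filter, hfilter, hfg _ (Nat.gcd_pos_of_pos_left d hn)]
  rw [← ArithmeticFunction.sum_eq_iff_sum_smul_moebius_eq.1 hgcd ℓ hℓ,
    Nat.sum_divisorsAntidiagonal' (f := fun s t => μ s • g (Nat.gcd t d))]

theorem ramanujanSum_eq_sum_divisors {q : ℕ} (hq : 0 < q) (n : ℤ) :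
    ramanujanSum q n = ∑ t ∈ q.divisors, μ (q / t) * if (t : ℤ) ∣ n then (t : ℤ) else 0 := by
  have hfilter : (Nat.gcd q n.natAbs).divisors = q.divisors.filter fun t : ℕ => (t : ℤ) ∣ n := by
    rw [← Nat.divisors_filter_dvd_of_dvd hq.ne' (Nat.gcd_dvd_left q n.natAbs)]
    exact filter_congr fun t ht => by
      simp [Nat.dvd_gcd_iff, Nat.dvd_of_mem_divisors ht, Int.natCast_dvd]
  rw [ramanujanSum, hfilter, sum_filter]
  refine sum_congr rfl fun t _ => ?_
  rw [mul_ite, mul_zero, mul_comm]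

theorem sum_divisors_ramanujanSum (a : ℤ) {n : ℕ} (hn : 0 < n) :
    ∑ q ∈ n.divisors, ramanujanSum q a = if (n : ℤ) ∣ a then (n : ℤ) else 0 := by
  let g (t : ℕ) : ℤ := if (t : ℤ) ∣ a then (t : ℤ) else 0
  refine ArithmeticFunction.sum_eq_iff_sum_smul_moebius_eq (g := g).2 (fun q hq => ?_) n hn
  rw [ramanujanSum_eq_sum_divisors hq,
    Nat.sum_divisorsAntidiagonal' (f := fun s t => μ s • g t)]
  simp only [g, smul_eq_mul]

theorem sum_divisors_moebius_mul_ite_gcd_dvd {ℓ : ℕ} (hℓ : 0 < ℓ) (d : ℕ) (a : ℤ) :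
    ∑ t ∈ ℓ.divisors, μ (ℓ / t) *
        (if (Nat.gcd t d : ℤ) ∣ a then (Nat.gcd t d : ℤ) else 0) =
      if ℓ ∣ d then ramanujanSum ℓ a else 0 := by
  simpa only [smul_eq_mul] using
    sum_divisors_moebius_smul_gcd (fun _ => sum_divisors_ramanujanSum a) hℓ d

theorem sum_filter_dvd_ramanujanSum_sub {ℓ : ℕ} (hℓ : 0 < ℓ) (d : ℕ) (a : ℤ) (s : Finset ℤ) :
    ∑ n ∈ s with (d : ℤ) ∣ n, ramanujanSum ℓ (n - a) =
      ∑ t ∈ ℓ.divisors, μ (ℓ / t) * (t * #{n ∈ s | n ≡ a [ZMOD t] ∧ n ≡ 0 [ZMOD d]}) := by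
  simp only [ramanujanSum_eq_sum_divisors hℓ]
  rw [sum_comm]
  refine sum_congr rfl fun t _ => ?_
  rw [← mul_sum, ← sum_filter, filter_filter, sum_const, nsmul_eq_mul, mul_comm (t : ℤ)]
  simp only [Int.modEq_zero_iff_dvd, Int.modEq_comm (b := a), Int.modEq_iff_dvd (a := a), and_comm]

theorem abs_mul_card_filter_modEq_sub_le {t d : ℕ} (ht : 0 < t) (hd : 0 < d) {x y : ℤ}
    (hxy : x ≤ y) (a : ℤ) :
    |(t : ℝ) * #{n ∈ Ioc x y | n ≡ a [ZMOD t] ∧ n ≡ 0 [ZMOD d]} -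
      (y - x) / d * (if (Nat.gcd t d : ℤ) ∣ a then (Nat.gcd t d : ℝ) else 0)| ≤ t := by
  have hscale : (t : ℝ) / Nat.lcm t d = Nat.gcd t d / d := by
    have hlcm : (Nat.lcm t d : ℝ) ≠ 0 := mod_cast (Nat.lcm_pos ht hd).ne'
    rw [div_eq_div_iff hlcm (mod_cast hd.ne')]
    exact_mod_cast (Nat.gcd_mul_lcm t d).symm
  have hfactor : (y - x) / d * (if (Nat.gcd t d : ℤ) ∣ a then (Nat.gcd t d : ℝ) else 0) =
      t * (if (Nat.gcd t d : ℤ) ∣ a - 0 then (y - x) / (Nat.lcm t d : ℝ) else 0) := by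
    rw [sub_zero]
    split_ifs
    · linear_combination -(y - x : ℝ) * hscale
    · simp only [mul_zero]
  rw [hfactor, ← mul_sub, abs_mul, Nat.abs_cast]
  exact mul_le_of_le_one_right t.cast_nonneg
    (abs_card_filter_modEq_and_modEq_sub_le_one ht hd hxy a 0)

theorem abs_sum_filter_dvd_ramanujanSum_sub_le {ℓ d : ℕ} (hℓ : 0 < ℓ) (hd : 0 < d) {x y : ℤ}
    (hxy : x ≤ y) (a : ℤ) :
    |((∑ n ∈ Ioc x y with (d : ℤ) ∣ n, ramanujanSum ℓ (n - a) : ℤ) : ℝ) -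
      (y - x) / d * ((if ℓ ∣ d then ramanujanSum ℓ a else 0 : ℤ) : ℝ)| ≤ σ 1 ℓ := by
  rw [sum_filter_dvd_ramanujanSum_sub hℓ, ← sum_divisors_moebius_mul_ite_gcd_dvd hℓ d a,
    ArithmeticFunction.sigma_one_apply]
  push_cast
  rw [mul_sum, ← sum_sub_distrib]
  refine (abs_sum_le_sum_abs _ _).trans (sum_le_sum fun t ht => ?_)
  have hmoebius : |(μ (ℓ / t) : ℝ)| ≤ 1 := mod_cast ArithmeticFunction.abs_moebius_le_one
  rw [mul_left_comm (_ / _ : ℝ), ← mul_sub, abs_mul]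
  exact (mul_le_of_le_one_left (abs_nonneg _) hmoebius).trans
    (abs_mul_card_filter_modEq_sub_le (Nat.pos_of_mem_divisors ht) hd hxy a)

theorem sigma_one_le_mul_one_add_log (n : ℕ) : (σ 1 n : ℝ) ≤ n * (1 + Real.log n) := by
  have hdual : (σ 1 n : ℝ) = n * ∑ t ∈ n.divisors, (t : ℝ)⁻¹ := by
    rw [ArithmeticFunction.sigma_one_apply, ← Nat.sum_div_divisors, mul_sum]
    push_cast
    refine sum_congr rfl fun t ht => ?_
    rw [Nat.cast_div (Nat.dvd_of_mem_divisors ht)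
      (mod_cast (Nat.pos_of_mem_divisors ht).ne'), div_eq_mul_inv]
  have hsubset : n.divisors ⊆ Icc 1 n := fun t ht =>
    mem_Icc.2 ⟨Nat.pos_of_mem_divisors ht, Nat.divisor_le ht⟩
  have hharmonic : ∑ t ∈ Icc 1 n, (t : ℝ)⁻¹ ≤ 1 + Real.log n := by
    simpa [harmonic_eq_sum_Icc] using harmonic_le_one_add_log n
  rw [hdual]
  gcongr
  exact (sum_le_sum_of_subset_of_nonneg hsubset fun _ _ _ => by positivity).trans hharmonic

theorem sigma_one_le_mul_rpow {ε : ℝ} (hε : 0 < ε) {n : ℕ} (hn : 0 < n) :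
    (σ 1 n : ℝ) ≤ (1 + 1 / ε) * (n : ℝ) ^ (1 + ε) := by
  have hn' : (0 : ℝ) < n := mod_cast hn
  have hone : 1 ≤ (n : ℝ) ^ ε := Real.one_le_rpow (mod_cast hn) hε.le
  have hlog : Real.log n ≤ (n : ℝ) ^ ε / ε := Real.log_le_rpow_div hn'.le hε
  calc (σ 1 n : ℝ) ≤ n * (1 + Real.log n) := sigma_one_le_mul_one_add_log n
    _ ≤ n * ((n : ℝ) ^ ε + (n : ℝ) ^ ε / ε) := by gcongr
    _ = (1 + 1 / ε) * (n : ℝ) ^ (1 + ε) := by rw [Real.rpow_add hn', Real.rpow_one]; ring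

/-- The sieve function of range `D` whose Eratosthenes transform is the restriction of `f'` to
`[1, D]`; truncating in the sum spares a support condition on `f'`. -/
def sieveFunction (f' : ℕ → ℂ) (D n : ℕ) : ℂ :=
  ∑ d ∈ n.divisors.filter (· ≤ D), f' d

theorem sum_sieveFunction_mul (f' : ℕ → ℂ) (D N : ℕ) (g : ℕ → ℂ) :
    ∑ n ∈ Icc 1 N, sieveFunction f' D n * g n =
      ∑ d ∈ Icc 1 D, f' d * ∑ n ∈ Icc 1 N with d ∣ n, g n := by
  simp only [sieveFunction, sum_mul, mul_sum]
  refine sum_comm' fun n d => ?_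
  simp only [mem_filter, mem_Icc, Nat.mem_divisors]
  constructor
  · rintro ⟨hn, ⟨hdn, -⟩, hdD⟩
    exact ⟨⟨hn, hdn⟩, Nat.pos_of_dvd_of_pos hdn hn.1, hdD⟩
  · rintro ⟨⟨hn, hdn⟩, -, hdD⟩
    exact ⟨hn, ⟨hdn, Nat.ne_of_gt hn.1⟩, hdD⟩

/-- The Ramanujan coefficient `f̂(ℓ)` of `sieveFunction f' D`. -/
noncomputable def ramanujanCoeff (f' : ℕ → ℂ) (D ℓ : ℕ) : ℂ :=
  ∑ m ∈ (Icc 1 D).filter (ℓ ∣ ·), f' m / (m : ℂ)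

theorem ramanujanCoeff_mul (f' : ℕ → ℂ) (D ℓ : ℕ) (z : ℂ) :
    ramanujanCoeff f' D ℓ * z = ∑ d ∈ Icc 1 D, f' d * if ℓ ∣ d then z / d else 0 := by
  rw [ramanujanCoeff, sum_filter, sum_mul]
  refine sum_congr rfl fun d _ => ?_
  split_ifs
  · ring
  · simp only [zero_mul, mul_zero]

theorem sum_Icc_filter_dvd_natCast {M : Type*} [AddCommMonoid M] (N d : ℕ) (g : ℤ → M) :
    ∑ n ∈ Icc 1 N with d ∣ n, g n = ∑ n ∈ Ioc (0 : ℤ) N with (d : ℤ) ∣ n, g n := by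
  refine sum_bij (fun n _ => (n : ℤ)) (fun n hn => ?_) (fun _ _ _ _ h => mod_cast h)
    (fun n hn => ?_) fun _ _ => rfl
  · simp only [mem_filter, mem_Icc, mem_Ioc, Int.natCast_dvd_natCast] at hn ⊢
    omega
  · simp only [mem_filter, mem_Ioc] at hn
    lift n to ℕ using hn.1.1.le
    refine ⟨n, ?_, rfl⟩
    simp only [mem_filter, mem_Icc]
    omega

theorem norm_sum_sieveFunction_mul_ramanujanSum_sub_le (f' : ℕ → ℂ) (N D : ℕ) {ℓ : ℕ}
    (hℓ : 0 < ℓ) (a : ℤ) :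
    ‖∑ n ∈ Icc 1 N, sieveFunction f' D n * (ramanujanSum ℓ ((n : ℤ) - a) : ℂ) -
        ramanujanCoeff f' D ℓ * (ramanujanSum ℓ a : ℂ) * (N : ℂ)‖ ≤
      σ 1 ℓ * ∑ d ∈ Icc 1 D, ‖f' d‖ := by
  rw [sum_sieveFunction_mul, mul_assoc, ramanujanCoeff_mul, ← sum_sub_distrib, mul_sum]
  refine (norm_sum_le _ _).trans (sum_le_sum fun d hd => ?_)
  rw [← mul_sub, norm_mul, mul_comm]
  gcongr
  have hbound := abs_sum_filter_dvd_ramanujanSum_sub_le hℓ (mem_Icc.1 hd).1 (Int.natCast_nonneg N) a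
  rw [← sum_Icc_filter_dvd_natCast, ← Real.norm_eq_abs, ← Complex.norm_real] at hbound
  refine (congrArg norm ?_).trans_le hbound
  split_ifs <;> push_cast <;> ring

theorem sum_Icc_norm_le_mul_rpow {E : Type*} [SeminormedAddGroup E] {f' : ℕ → E} {c ε : ℝ}
    (hε : 0 ≤ ε) {D : ℕ} (hf' : ∀ q ∈ Icc 1 D, ‖f' q‖ ≤ c * (q : ℝ) ^ ε) :
    ∑ d ∈ Icc 1 D, ‖f' d‖ ≤ c * (D : ℝ) ^ (1 + ε) := by
  rcases D.eq_zero_or_pos with rfl | hD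
  · simp [Real.zero_rpow (by positivity : 1 + ε ≠ 0)]
  have hc : 0 ≤ c := by
    simpa using (norm_nonneg _).trans (hf' 1 (mem_Icc.2 ⟨le_rfl, hD⟩))
  have hterm : ∀ d ∈ Icc 1 D, ‖f' d‖ ≤ c * (D : ℝ) ^ ε := by
    intro d hd
    refine (hf' d hd).trans ?_
    gcongr
    exact (mem_Icc.1 hd).2
  calc ∑ d ∈ Icc 1 D, ‖f' d‖ ≤ #(Icc 1 D) • (c * (D : ℝ) ^ ε) := sum_le_card_nsmul _ _ _ hterm
    _ = c * (D : ℝ) ^ (1 + ε) := by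
      rw [Nat.card_Icc, Nat.add_sub_cancel, nsmul_eq_mul, Real.rpow_add (mod_cast hD),
        Real.rpow_one]
      ring

theorem sieve_function_against_ramanujan_sum_general {f' : ℕ → ℂ} {c ε : ℝ} (hε : 0 < ε)
    (N : ℕ) {D ℓ : ℕ} (hℓ : 0 < ℓ) (hf' : ∀ q ∈ Icc 1 D, ‖f' q‖ ≤ c * (q : ℝ) ^ ε) (a : ℤ) :
    ‖∑ n ∈ Icc 1 N, sieveFunction f' D n * (ramanujanSum ℓ ((n : ℤ) - a) : ℂ) -
        ramanujanCoeff f' D ℓ * (ramanujanSum ℓ a : ℂ) * (N : ℂ)‖ ≤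
      (1 + 1 / ε) * c * ((D : ℝ) * ℓ) ^ (1 + ε) := by
  calc _ ≤ σ 1 ℓ * ∑ d ∈ Icc 1 D, ‖f' d‖ :=
        norm_sum_sieveFunction_mul_ramanujanSum_sub_le f' N D hℓ a
    _ ≤ (1 + 1 / ε) * (ℓ : ℝ) ^ (1 + ε) * (c * (D : ℝ) ^ (1 + ε)) := by
        gcongr
        · exact sigma_one_le_mul_rpow hε hℓ
        · exact sum_Icc_norm_le_mul_rpow hε.le hf'
    _ = (1 + 1 / ε) * c * ((D : ℝ) * ℓ) ^ (1 + ε) := by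
        rw [Real.mul_rpow D.cast_nonneg ℓ.cast_nonneg]
        ring

/-- Lemma A.3: let `f` be a sieve function of range `D ≪ N`,
i.e. `f(n) = ∑_{d ∣ n, d ≤ D} f'(d)` with essentially bounded Eratosthenes
transform `f'`.  Then, uniformly in `a ∈ ℤ`,
`∑_{n ≤ N} f(n) c_ℓ(n − a) = f̂(ℓ) c_ℓ(a) N + O_ε((Dℓ)^{1+ε})`,
where `f̂(ℓ) = ∑_{m ≤ D, ℓ ∣ m} f'(m)/m`. -/
theorem sieve_function_against_ramanujan_sum
    (f' : ℕ → ℂ)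
    (hf' : ∀ ε : ℝ, 0 < ε → ∃ c : ℝ, 0 < c ∧ ∀ q : ℕ, 1 ≤ q → ‖f' q‖ ≤ c * (q : ℝ) ^ ε)
    (ε : ℝ) (hε : 0 < ε) (A : ℝ) (hA : 0 < A) :
    ∃ C : ℝ, 0 < C ∧ ∀ (N D ℓ : ℕ) (a : ℤ), 0 < N → 0 < D → 0 < ℓ →
      (D : ℝ) ≤ A * N →
      ‖(∑ n ∈ Finset.Icc 1 N,
            (∑ d ∈ n.divisors.filter (· ≤ D), f' d) * (ramanujanSum ℓ ((n : ℤ) - a) : ℂ))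
          - (∑ m ∈ (Finset.Icc 1 D).filter (ℓ ∣ ·), f' m / (m : ℂ)) *
              (ramanujanSum ℓ a : ℂ) * (N : ℂ)‖
        ≤ C * ((D : ℝ) * (ℓ : ℝ)) ^ (1 + ε) := by
  obtain ⟨c, hc, hf⟩ := hf' ε hε
  exact ⟨(1 + 1 / ε) * c, by positivity, fun N D ℓ a _ _ hℓ _ =>
    sieve_function_against_ramanujan_sum_general hε N hℓ (fun q hq => hf q (mem_Icc.1 hq).1) a⟩
end

section
/- Let N, h be positive integers with h ≪ N, let f, g : ℕ → ℂ be essentially bounded, and suppose the shift-Ramanujan coefficients of their correlation are given by the explicit formula Ĉ_{f,g}(N,ℓ) = (𝑔̂(ℓ)/φ(ℓ))·Σ_{n ≤ N} f(n)·c_ℓ(n), where 𝑔̂(ℓ) ≪_ε (N+h)^ε/ℓ. Then the shift-Ramanujan expansion is in the first class, i.e. Ĉ_{f,g}(N,ℓ) ≪_ε N^{1+ε}/ℓ² for all ℓ ≪ N and every ε > 0. -/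
/-!
By the definition of `c_ℓ`, one has `|c_ℓ(n)| ≤ ∑ d` over the common divisors `d` of `ℓ` and `n`.
Summing over `n ≤ N` first, each `d ∣ ℓ` contributes `d⌊N/d⌋ ≤ N`, so `∑_{n ≤ N} |c_ℓ(n)| ≤ N τ(ℓ)`.
Since moreover `ℓ = ∑_{d ∣ ℓ} φ(d) ≤ τ(ℓ) φ(ℓ)`, the coefficient is at most
`|ĝ(ℓ)| · max_{n ≤ N} |f(n)| · N τ(ℓ)² / ℓ`. The factor `ĝ(ℓ) ≪ N^ε / ℓ` supplies the second `1/ℓ`,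
and `f` and the divisor function `τ` only cost factors `N^ε`.
-/

open Finset

/-- The predicate "essentially bounded": `f(n) ≪_ε n^ε` for every `ε > 0`. Only `n ≥ 1` is
constrained, as the bound at `n = 0`, where `(0 : ℝ) ^ ε = 0`, would force `f 0 = 0`. -/
def EssentiallyBounded {E : Type*} [Norm E] (f : ℕ → E) : Prop :=
  ∀ ε : ℝ, 0 < ε → ∃ c : ℝ, 0 < c ∧ ∀ n : ℕ, 1 ≤ n → ‖f n‖ ≤ c * (n : ℝ) ^ ε

lemma rpow_div_le_of_le_mul_rpow {x y K κ ε : ℝ} (hx : 0 ≤ x) (hy : 0 ≤ y) (hK : 0 ≤ K)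
    (hκ : 0 < κ) (hε : 0 ≤ ε) (h : y ≤ K * x ^ κ) :
    y ^ (ε / κ) ≤ K ^ (ε / κ) * x ^ ε :=
  calc
    y ^ (ε / κ) ≤ (K * x ^ κ) ^ (ε / κ) := by gcongr
    _ = K ^ (ε / κ) * x ^ ε := by
      rw [Real.mul_rpow hK (by positivity), ← Real.rpow_mul hx, mul_div_cancel₀ _ hκ.ne']

lemma EssentiallyBounded.exists_norm_le_of_le_mul_rpow {E : Type*} [Norm E] {f : ℕ → E}
    (hf : EssentiallyBounded f) {K κ ε : ℝ} (hK : 0 < K) (hκ : 0 < κ) (hε : 0 < ε) :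
    ∃ C : ℝ, 0 < C ∧ ∀ N n : ℕ, 1 ≤ n → (n : ℝ) ≤ K * (N : ℝ) ^ κ → ‖f n‖ ≤ C * (N : ℝ) ^ ε := by
  obtain ⟨c, hc, hfc⟩ := hf (ε / κ) (by positivity)
  refine ⟨c * K ^ (ε / κ), by positivity, fun N n hn hnN => (hfc n hn).trans ?_⟩
  rw [mul_assoc]
  gcongr
  exact rpow_div_le_of_le_mul_rpow N.cast_nonneg n.cast_nonneg hK.le hκ hε.le hnN

lemma exists_norm_le_rpow_div_of_norm_le_add_rpow_div {E : Type*} [Norm E] {a : ℕ → ℕ → ℕ → E}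
    (ha : ∀ ε : ℝ, 0 < ε → ∃ c : ℝ, 0 < c ∧ ∀ N h ℓ : ℕ, 0 < N → 1 ≤ ℓ →
      ‖a N h ℓ‖ ≤ c * ((N + h : ℕ) : ℝ) ^ ε / (ℓ : ℝ))
    {A κ ε : ℝ} (hA : 0 < A) (hκ : 1 ≤ κ) (hε : 0 < ε) :
    ∃ C : ℝ, 0 < C ∧ ∀ N h ℓ : ℕ, 0 < N → (h : ℝ) ≤ A * (N : ℝ) ^ κ → 1 ≤ ℓ →
      ‖a N h ℓ‖ ≤ C * (N : ℝ) ^ ε / ℓ := by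
  have κ_pos : 0 < κ := one_pos.trans_le hκ
  obtain ⟨c, hc, hac⟩ := ha (ε / κ) (by positivity)
  refine ⟨c * (1 + A) ^ (ε / κ), by positivity, fun N h ℓ hN hh hℓ => ?_⟩
  have add_le : ((N + h : ℕ) : ℝ) ≤ (1 + A) * (N : ℝ) ^ κ := by
    have : (N : ℝ) ≤ (N : ℝ) ^ κ := Real.self_le_rpow_of_one_le (mod_cast hN) hκ
    push_cast
    linarith
  refine (hac N h ℓ hN hℓ).trans ?_
  rw [mul_assoc]
  gcongr
  exact rpow_div_le_of_le_mul_rpow N.cast_nonneg (Nat.cast_nonneg _) (by positivity) κ_pos hε.le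
    add_le

lemma natCast_add_one_le_max_mul_pow {K : Type*} [Field K] [LinearOrder K] [IsStrictOrderedRing K]
    {x : K} (hx : 1 < x) (k : ℕ) : (k : K) + 1 ≤ max 1 (x - 1)⁻¹ * x ^ k := by
  have : 0 < x - 1 := sub_pos.mpr hx
  have bernoulli : 1 + k * (x - 1) ≤ x ^ k := one_add_mul_sub_le_pow (by linarith) k
  calc
    (k : K) + 1 = 1 * 1 + (x - 1)⁻¹ * (k * (x - 1)) := by field_simp; ring
    _ ≤ max 1 (x - 1)⁻¹ * 1 + max 1 (x - 1)⁻¹ * (k * (x - 1)) := by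
      gcongr
      · exact le_max_left _ _
      · exact le_max_right _ _
    _ = max 1 (x - 1)⁻¹ * (1 + k * (x - 1)) := by ring
    _ ≤ max 1 (x - 1)⁻¹ * x ^ k := by gcongr

lemma prod_primeFactors_rpow_pow_factorization {n : ℕ} (hn : n ≠ 0) (δ : ℝ) :
    ∏ p ∈ n.primeFactors, ((p : ℝ) ^ δ) ^ n.factorization p = (n : ℝ) ^ δ := by
  conv_rhs => rw [← Nat.prod_factorization_pow_eq_self hn, Finsupp.prod, Nat.support_factorization]
  push_cast
  rw [← Real.finsetProd_rpow _ _ fun p _ => by positivity]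
  exact prod_congr rfl fun p _ => Real.rpow_pow_comm p.cast_nonneg δ _

lemma card_divisors_le_prod_mul_rpow {n : ℕ} (hn : n ≠ 0) {δ : ℝ} (hδ : 0 < δ) :
    (#n.divisors : ℝ) ≤ (∏ p ∈ n.primeFactors, max 1 ((p : ℝ) ^ δ - 1)⁻¹) * (n : ℝ) ^ δ := by
  rw [Nat.card_divisors hn, ← prod_primeFactors_rpow_pow_factorization hn, ← prod_mul_distrib]
  push_cast
  refine prod_le_prod (fun p _ => by positivity) fun p hp => ?_
  have one_lt_p : (1 : ℝ) < p := mod_cast (Nat.prime_of_mem_primeFactors hp).one_lt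
  exact natCast_add_one_le_max_mul_pow (Real.one_lt_rpow one_lt_p hδ) _

lemma prod_le_prod_of_one_le_of_eq_one {ι R : Type*} [CommMonoidWithZero R] [Preorder R]
    [ZeroLEOneClass R] [PosMulMono R] {w : ι → R} (s t : Finset ι)
    (one_le : ∀ i, 1 ≤ w i) (eq_one : ∀ i ∉ t, w i = 1) : ∏ i ∈ s, w i ≤ ∏ i ∈ t, w i := by
  classical
  calc
    ∏ i ∈ s, w i ≤ ∏ i ∈ s ∪ t, w i :=
      prod_le_prod_of_subset_of_one_le subset_union_left
        (fun i _ => zero_le_one.trans (one_le i)) fun i _ _ => one_le i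
    _ = ∏ i ∈ t, w i := (prod_subset subset_union_right fun i _ hi => eq_one i hi).symm

theorem essentiallyBounded_card_divisors : EssentiallyBounded fun n => (#n.divisors : ℝ) := by
  intro δ hδ
  obtain ⟨M, hM⟩ := exists_nat_ge ((2 : ℝ) ^ δ⁻¹)
  -- Only the finitely many primes with `p ^ δ < 2` contribute to the constant.
  have eq_one (p : ℕ) (hp : p ∉ range M) : max 1 ((p : ℝ) ^ δ - 1)⁻¹ = 1 := by
    have hMp : (M : ℝ) ≤ p := mod_cast not_lt.mp (mem_range.not.mp hp)
    have two_le : (2 : ℝ) ≤ (p : ℝ) ^ δ :=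
      (Real.rpow_inv_le_iff_of_pos zero_le_two p.cast_nonneg hδ).mp (hM.trans hMp)
    exact max_eq_left (inv_le_one_of_one_le₀ (by linarith))
  refine ⟨∏ p ∈ range M, max 1 ((p : ℝ) ^ δ - 1)⁻¹, by positivity, fun n hn => ?_⟩
  rw [Real.norm_natCast]
  refine (card_divisors_le_prod_mul_rpow (Nat.ne_of_gt hn) hδ).trans ?_
  gcongr ?_ * _
  exact prod_le_prod_of_one_le_of_eq_one _ _ (fun p => le_max_left _ _) eq_one

lemma le_card_divisors_mul_totient (n : ℕ) : n ≤ #n.divisors * n.totient :=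
  calc
    n = ∑ d ∈ n.divisors, d.totient := n.sum_totient.symm
    _ ≤ #n.divisors • n.totient := sum_le_card_nsmul _ _ _ fun _ hd => by
      obtain ⟨d_dvd, n_ne_zero⟩ := Nat.mem_divisors.mp hd
      exact Nat.le_of_dvd (Nat.totient_pos.mpr n_ne_zero.bot_lt) (Nat.totient_dvd_of_dvd d_dvd)

lemma abs_ramanujanSum_le (q : ℕ) (n : ℤ) :
    |ramanujanSum q n| ≤ ∑ d ∈ (q.gcd n.natAbs).divisors, (d : ℤ) := by
  refine (abs_sum_le_sum_abs _ _).trans (sum_le_sum fun d _ => ?_)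
  rw [abs_mul, Nat.abs_cast]
  exact mul_le_of_le_one_right d.cast_nonneg ArithmeticFunction.abs_moebius_le_one

lemma sum_abs_ramanujanSum_le {q : ℕ} (hq : q ≠ 0) (N : ℕ) :
    ∑ n ∈ Icc 1 N, |ramanujanSum q n| ≤ N * #q.divisors := by
  have divisors_gcd (n : ℕ) : (q.gcd n).divisors = {d ∈ q.divisors | d ∣ n} := by
    ext d
    simp [Nat.dvd_gcd_iff, hq]
  calc
    ∑ n ∈ Icc 1 N, |ramanujanSum q n|
      ≤ ∑ n ∈ Icc 1 N, ∑ d ∈ q.divisors with d ∣ n, (d : ℤ) :=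
        sum_le_sum fun n _ => divisors_gcd n ▸ abs_ramanujanSum_le q n
    _ = ∑ d ∈ q.divisors, ∑ n ∈ Icc 1 N with d ∣ n, (d : ℤ) := by
      simp only [sum_filter]
      exact sum_comm
    _ = ∑ d ∈ q.divisors, ((N / d * d : ℕ) : ℤ) := sum_congr rfl fun d _ => by
      have card_multiples : #{n ∈ Icc 1 N | d ∣ n} = N / d := Nat.Ioc_filter_dvd_card_eq_div N d
      rw [sum_const, card_multiples, nsmul_eq_mul, Nat.cast_mul]
    _ ≤ #q.divisors • (N : ℤ) :=
      sum_le_card_nsmul _ _ _ fun d _ => mod_cast Nat.div_mul_le_self N d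
    _ = N * #q.divisors := by rw [nsmul_eq_mul, mul_comm]

lemma norm_sum_mul_ramanujanSum_le {q N : ℕ} (hq : q ≠ 0) {f : ℕ → ℂ} {M : ℝ} (hM : 0 ≤ M)
    (hf : ∀ n ∈ Icc 1 N, ‖f n‖ ≤ M) :
    ‖∑ n ∈ Icc 1 N, f n * (ramanujanSum q n : ℂ)‖ ≤ M * (N * #q.divisors) :=
  calc
    ‖∑ n ∈ Icc 1 N, f n * (ramanujanSum q n : ℂ)‖
      ≤ ∑ n ∈ Icc 1 N, M * |(ramanujanSum q n : ℝ)| := norm_sum_le_of_le _ fun n hn => by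
        rw [norm_mul, Complex.norm_intCast]
        gcongr
        exact hf n hn
    _ = M * ∑ n ∈ Icc 1 N, |(ramanujanSum q n : ℝ)| := (mul_sum _ _ _).symm
    _ ≤ M * (N * #q.divisors) := by
      gcongr
      exact_mod_cast sum_abs_ramanujanSum_le hq N

lemma norm_div_totient_mul_sum_ramanujanSum_le {q N : ℕ} (hq : q ≠ 0) (a : ℂ) {f : ℕ → ℂ} {M : ℝ}
    (hM : 0 ≤ M) (hf : ∀ n ∈ Icc 1 N, ‖f n‖ ≤ M) :
    ‖a / (q.totient : ℂ) * ∑ n ∈ Icc 1 N, f n * (ramanujanSum q n : ℂ)‖ ≤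
      ‖a‖ * M * N * (#q.divisors : ℝ) ^ 2 / q := by
  have q_pos : (0 : ℝ) < q := mod_cast Nat.pos_of_ne_zero hq
  have totient_pos : (0 : ℝ) < q.totient := mod_cast Nat.totient_pos.mpr (Nat.pos_of_ne_zero hq)
  have inv_totient_le : (q.totient : ℝ)⁻¹ ≤ #q.divisors / q := by
    rw [inv_le_iff_one_le_mul₀ totient_pos, div_mul_eq_mul_div, one_le_div q_pos]
    exact_mod_cast le_card_divisors_mul_totient q
  rw [norm_mul, norm_div, Complex.norm_natCast, div_eq_mul_inv]
  calc
    ‖a‖ * (q.totient : ℝ)⁻¹ * ‖∑ n ∈ Icc 1 N, f n * (ramanujanSum q n : ℂ)‖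
      ≤ ‖a‖ * (#q.divisors / q) * (M * (N * #q.divisors)) := by
        gcongr
        exact norm_sum_mul_ramanujanSum_le hq hM hf
    _ = ‖a‖ * M * N * (#q.divisors : ℝ) ^ 2 / q := by ring

theorem sre_first_class_general {f : ℕ → ℂ} (hf : EssentiallyBounded f) {ghat : ℕ → ℕ → ℕ → ℂ}
    (hghat : ∀ ε : ℝ, 0 < ε → ∃ c : ℝ, 0 < c ∧ ∀ N h ℓ : ℕ, 0 < N → 1 ≤ ℓ →
      ‖ghat N h ℓ‖ ≤ c * ((N + h : ℕ) : ℝ) ^ ε / (ℓ : ℝ))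
    {Chat : ℕ → ℕ → ℕ → ℂ}
    (hChat : ∀ N h ℓ : ℕ, 0 < N → 0 < h → 1 ≤ ℓ →
      Chat N h ℓ = ghat N h ℓ / (Nat.totient ℓ : ℂ) *
        ∑ n ∈ Icc 1 N, f n * (ramanujanSum ℓ (n : ℤ) : ℂ))
    {A B κ : ℝ} (hA : 0 < A) (hB : 0 < B) (hκ : 1 ≤ κ) :
    ∀ ε : ℝ, 0 < ε → ∃ C : ℝ, 0 < C ∧ ∀ N h ℓ : ℕ, 0 < N → 0 < h → (h : ℝ) ≤ A * (N : ℝ) ^ κ →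
      1 ≤ ℓ → (ℓ : ℝ) ≤ B * (N : ℝ) ^ κ →
      ‖Chat N h ℓ‖ ≤ C * (N : ℝ) ^ (1 + ε) / (ℓ : ℝ) ^ 2 := by
  intro ε hε
  have κ_pos : 0 < κ := one_pos.trans_le hκ
  -- `ghat` and `f` each cost a factor `N ^ (ε / 4)`, and `τ(ℓ)²` costs two.
  have quarter_pos : 0 < ε / 4 := by positivity
  obtain ⟨cg, cg_pos, ghat_le⟩ :=
    exists_norm_le_rpow_div_of_norm_le_add_rpow_div hghat hA hκ quarter_pos
  obtain ⟨cf, cf_pos, f_le⟩ := hf (ε / 4) quarter_pos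
  obtain ⟨cτ, cτ_pos, card_divisors_le⟩ :=
    essentiallyBounded_card_divisors.exists_norm_le_of_le_mul_rpow hB κ_pos quarter_pos
  refine ⟨cg * cf * cτ ^ 2, by positivity, fun N h ℓ hN hh hhN hℓ hℓN => ?_⟩
  have f_le_max (n : ℕ) (hn : n ∈ Icc 1 N) : ‖f n‖ ≤ cf * (N : ℝ) ^ (ε / 4) := by
    obtain ⟨one_le_n, n_le_N⟩ := mem_Icc.mp hn
    exact (f_le n one_le_n).trans (by gcongr)
  have card_le : (#ℓ.divisors : ℝ) ≤ cτ * (N : ℝ) ^ (ε / 4) := by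
    simpa only [Real.norm_natCast] using card_divisors_le N ℓ hℓ hℓN
  have rpow_split : (N : ℝ) ^ (1 + ε) = N * ((N : ℝ) ^ (ε / 4)) ^ 4 := by
    rw [Real.rpow_add (by positivity), Real.rpow_one, ← Real.rpow_mul_natCast N.cast_nonneg]
    norm_num
  calc
    ‖Chat N h ℓ‖ ≤ ‖ghat N h ℓ‖ * (cf * (N : ℝ) ^ (ε / 4)) * N * (#ℓ.divisors : ℝ) ^ 2 / ℓ := by
      rw [hChat N h ℓ hN hh hℓ]
      exact norm_div_totient_mul_sum_ramanujanSum_le (Nat.ne_of_gt hℓ) _ (by positivity) f_le_max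
    _ ≤ cg * (N : ℝ) ^ (ε / 4) / ℓ * (cf * (N : ℝ) ^ (ε / 4)) * N *
        (cτ * (N : ℝ) ^ (ε / 4)) ^ 2 / ℓ := by
      gcongr
      exact ghat_le N h ℓ hN hhN hℓ
    _ = cg * cf * cτ ^ 2 * (N : ℝ) ^ (1 + ε) / (ℓ : ℝ) ^ 2 := by rw [rpow_split]; ring

/-- let `N, h` be positive integers with `h ≪ N`, let `f, g` be
essentially bounded, and suppose the shift-Ramanujan coefficients of their
correlation are given by the explicit formula
`Ĉ_{f,g}(N,ℓ) = (ĝ(ℓ)/φ(ℓ)) ∑_{n ≤ N} f(n) c_ℓ(n)`, where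
`ĝ(ℓ) ≪_ε (N+h)^ε / ℓ`.  Then the shift-Ramanujan expansion is in the first
class: `Ĉ_{f,g}(N,ℓ) ≪_ε N^{1+ε}/ℓ²` for all `ℓ ≪ N` and every `ε > 0`. -/
theorem sre_first_class
    (f g : ℕ → ℂ)
    (hf : ∀ ε : ℝ, 0 < ε → ∃ c : ℝ, 0 < c ∧ ∀ n : ℕ, 1 ≤ n → ‖f n‖ ≤ c * (n : ℝ) ^ ε)
    (hg : ∀ ε : ℝ, 0 < ε → ∃ c : ℝ, 0 < c ∧ ∀ n : ℕ, 1 ≤ n → ‖g n‖ ≤ c * (n : ℝ) ^ ε)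
    (ghat : ℕ → ℕ → ℕ → ℂ)  -- `ghat N h ℓ` : Ramanujan coefficient of `g` (truncated at `N+h`)
    (hghat : ∀ ε : ℝ, 0 < ε → ∃ c : ℝ, 0 < c ∧ ∀ N h ℓ : ℕ, 0 < N → 1 ≤ ℓ →
      ‖ghat N h ℓ‖ ≤ c * ((N + h : ℕ) : ℝ) ^ ε / (ℓ : ℝ))
    (Chat : ℕ → ℕ → ℕ → ℂ)  -- `Chat N h ℓ` : shift-Ramanujan coefficient `Ĉ_{f,g}(N,ℓ)`
    (hChat : ∀ N h ℓ : ℕ, 0 < N → 0 < h → 1 ≤ ℓ →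
      Chat N h ℓ = ghat N h ℓ / (Nat.totient ℓ : ℂ) *
        ∑ n ∈ Finset.Icc 1 N, f n * (ramanujanSum ℓ (n : ℤ) : ℂ))
    (A B : ℝ) (hA : 0 < A) (hB : 0 < B) :
    ∀ ε : ℝ, 0 < ε → ∃ C : ℝ, 0 < C ∧ ∀ N h ℓ : ℕ, 0 < N → 0 < h → (h : ℝ) ≤ A * N →
      1 ≤ ℓ → (ℓ : ℝ) ≤ B * N →
      ‖Chat N h ℓ‖ ≤ C * (N : ℝ) ^ (1 + ε) / (ℓ : ℝ) ^ 2 := by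
  simpa only [Real.rpow_one] using sre_first_class_general hf hghat hChat hA hB (le_refl 1)
end
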